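/- arXiv:2002.08359 — 2 statements merged into one kernel-verified Lean document; each statement's English description precedes it below -/
import Mathlib

section
/- For every infinite set X ⊆ ℝ there exist a nowhere dense Lebesgue null set Y ⊆ ℝ, a strictly increasing bijection φ : X → Y which is a homeomorphism when X is totally disconnected, and a set S ⊆ ℝ of cardinality continuum such that the translates ξ + Y for ξ ∈ S form a partition of ℝ. -/
noncomputable section TranslatesAux

open Set Filter Topology

/-- Jump function along the sequence d. -/
def jumpFun (d : ℕ → ℝ) (x : ℝ) : ℝ := ∑' n, if d n < x then (1 / (n.factorial : ℝ)) else 0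

theorem summable_inv_fact : Summable (fun n : ℕ => 1 / (n.factorial : ℝ)) := by
  simpa using Real.summable_pow_div_factorial 1

theorem jump_summable (d : ℕ → ℝ) (x : ℝ) :
    Summable (fun n => if d n < x then (1 / (n.factorial : ℝ)) else 0) := by
  refine Summable.of_nonneg_of_le (fun n => ?_) (fun n => ?_) summable_inv_fact
  · split_ifs <;> positivity
  · split_ifs
    · exact le_rfl
    · positivity

theorem jump_strictMono (d : ℕ → ℝ) (hd : DenseRange d) : StrictMono (jumpFun d) := by
  intro x y hxy
  obtain ⟨n, hn⟩ := hd.exists_mem_open isOpen_Ioo (nonempty_Ioo.2 hxy)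
  refine Summable.tsum_lt_tsum (i := n) (fun m => ?_) ?_ (jump_summable d x) (jump_summable d y)
  · by_cases h : d m < x
    · simp [h, h.trans hxy]
    · simp only [h, if_false]
      split_ifs <;> positivity
  · simp only [hn.1.not_gt, hn.2, if_true, if_false]
    positivity

theorem jump_continuousAt (d : ℕ → ℝ) (x : ℝ) (hx : ∀ n, d n ≠ x) :
    ContinuousAt (jumpFun d) x := by
  unfold ContinuousAt jumpFun
  refine tendsto_tsum_of_dominated_convergence summable_inv_fact (fun n => ?_) (.of_forall fun y n => ?_)
  · refine tendsto_const_nhds.congr' ?_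
    rcases lt_or_gt_of_ne (hx n) with h | h
    · filter_upwards [lt_mem_nhds h] with y hy
      simp [h, hy]
    · filter_upwards [gt_mem_nhds h] with y hy
      simp [h.not_gt, hy.not_gt]
  · split_ifs
    · rw [Real.norm_of_nonneg (by positivity)]
    · simp

theorem tail_bound (N : ℕ) : ∑' k : ℕ, 1 / ((k + N).factorial : ℝ) ≤
    (∑' k : ℕ, 1 / (k.factorial : ℝ)) / (N.factorial : ℝ) := by
  rw [← tsum_div_const]
  refine Summable.tsum_le_tsum (fun k => ?_) ((summable_nat_add_iff N).2 summable_inv_fact)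
    (summable_inv_fact.div_const _)
  rw [div_div]
  refine one_div_le_one_div_of_le (by positivity) ?_
  exact_mod_cast Nat.le_of_dvd (Nat.factorial_pos _) (Nat.factorial_mul_factorial_dvd_factorial_add k N)

/-- A bounded factorial series with integer coefficients and sum zero terminates. -/
theorem cantor_series (C : ℕ → ℤ) (M : ℝ) (hM : ∀ n, |(C n : ℝ)| ≤ M)
    (h0 : ∑' n, (C n : ℝ) * (1 / (n.factorial : ℝ)) = 0) : ∃ N, ∀ n, N ≤ n → C n = 0 := by
  set E : ℝ := ∑' k : ℕ, 1 / (k.factorial : ℝ) with hE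
  have hM0 : 0 ≤ M := (abs_nonneg _).trans (hM 0)
  have habs : ∀ n, ‖(C n : ℝ) * (1 / (n.factorial : ℝ))‖ ≤ M * (1 / (n.factorial : ℝ)) := by
    intro n
    rw [norm_mul, Real.norm_of_nonneg (by positivity : (0:ℝ) ≤ 1 / (n.factorial : ℝ))]
    exact mul_le_mul_of_nonneg_right (hM n) (by positivity)
  have hs : Summable (fun n => (C n : ℝ) * (1 / (n.factorial : ℝ))) :=
    Summable.of_norm_bounded (summable_inv_fact.mul_left M) habs
  set R : ℕ → ℝ := fun N => ∑' k, (C (k + N) : ℝ) * (1 / ((k + N).factorial : ℝ)) with hR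
  have hsplit : ∀ N, ∑ n ∈ Finset.range N, (C n : ℝ) * (1 / (n.factorial : ℝ)) + R N = 0 := by
    intro N
    rw [← h0]
    exact hs.sum_add_tsum_nat_add N
  have hRb : ∀ N, |R N| ≤ M * (E / (N.factorial : ℝ)) := by
    intro N
    refine (tsum_of_norm_bounded (((summable_nat_add_iff N).2 summable_inv_fact).mul_left M).hasSum
      (fun k => habs (k + N))).trans ?_
    rw [tsum_mul_left]
    exact mul_le_mul_of_nonneg_left (tail_bound N) hM0
  have hR0 : ∀ N : ℕ, M * E < N + 1 → R (N + 1) = 0 := by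
    intro N hN
    have hint : ∃ z : ℤ, (N.factorial : ℝ) * R (N + 1) = z := by
      refine ⟨- ∑ n ∈ Finset.range (N + 1), C n * ((N.factorial / n.factorial : ℕ) : ℤ), ?_⟩
      have := hsplit (N + 1)
      have h1 : R (N + 1) = - ∑ n ∈ Finset.range (N + 1), (C n : ℝ) * (1 / (n.factorial : ℝ)) := by
        linarith
      rw [h1]
      rw [Int.cast_neg, Int.cast_sum, mul_neg, Finset.mul_sum]
      congr 1
      refine Finset.sum_congr rfl fun n hn => ?_
      have hdvd : n.factorial ∣ N.factorial :=
        Nat.factorial_dvd_factorial (Nat.lt_succ_iff.1 (Finset.mem_range.1 hn))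
      rw [Int.cast_mul, Int.cast_natCast, Nat.cast_div hdvd (by positivity)]
      ring
    obtain ⟨z, hz⟩ := hint
    have hlt : |(N.factorial : ℝ) * R (N + 1)| < 1 := by
      rw [abs_mul, abs_of_nonneg (by positivity : (0:ℝ) ≤ N.factorial)]
      calc (N.factorial : ℝ) * |R (N + 1)| ≤ N.factorial * (M * (E / ((N + 1).factorial : ℝ))) :=
            mul_le_mul_of_nonneg_left (hRb _) (by positivity)
        _ = M * E / (N + 1) := by
            rw [Nat.factorial_succ]; push_cast
            field_simp
        _ < 1 := by rw [div_lt_one (by positivity)]; exact hN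
    rw [hz] at hlt
    have hz0 : z = 0 := by
      have : |z| < 1 := by exact_mod_cast hlt
      exact Int.abs_lt_one_iff.1 this
    rw [hz0] at hz
    have hne : (N.factorial : ℝ) ≠ 0 := by positivity
    simpa [hne] using hz
  obtain ⟨K, hK⟩ := exists_nat_gt (M * E)
  refine ⟨K + 1, fun n hn => ?_⟩
  obtain ⟨m, rfl⟩ : ∃ m, n = m + 1 := ⟨n - 1, by omega⟩
  have hm : (K : ℝ) ≤ m := by exact_mod_cast (by omega : K ≤ m)
  have e1 := hsplit (m + 1)
  have e2 := hsplit (m + 1 + 1)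
  rw [hR0 m (by linarith)] at e1
  rw [hR0 (m + 1) (by push_cast; linarith), Finset.sum_range_succ] at e2
  have h3 : (C (m + 1) : ℝ) * (1 / ((m + 1).factorial : ℝ)) = 0 := by linarith
  have hne : (1 / ((m + 1).factorial : ℝ)) ≠ 0 := by positivity
  have := (mul_eq_zero.1 h3).resolve_right hne
  exact_mod_cast this

theorem jump_linearIndependent (d : ℕ → ℝ) (hd : DenseRange d) :
    LinearIndependent ℤ (jumpFun d) := by
  rw [linearIndependent_iff']
  intro s g hg
  by_contra! hcon
  obtain ⟨i, his, hgi⟩ := hcon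
  set s' := s.filter (fun i => g i ≠ 0) with hs'
  have hne : s'.Nonempty := ⟨i, by simp [hs', his, hgi]⟩
  set m := s'.max' hne with hm
  have hmem : m ∈ s' := s'.max'_mem hne
  have hmax : ∀ j ∈ s', j ≤ m := fun j hj => s'.le_max' j hj
  set C : ℕ → ℤ := fun n => ∑ j ∈ s, if d n < j then g j else 0 with hC
  have hsum : ∑' n, (C n : ℝ) * (1 / (n.factorial : ℝ)) = 0 := by
    rw [← hg]
    have : ∀ n, (C n : ℝ) * (1 / (n.factorial : ℝ)) =
        ∑ j ∈ s, (g j : ℝ) * (if d n < j then (1 / (n.factorial : ℝ)) else 0) := by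
      intro n
      rw [hC]
      push_cast
      rw [Finset.sum_mul]
      refine Finset.sum_congr rfl fun j _ => ?_
      split_ifs <;> simp
    simp_rw [this]
    rw [Summable.tsum_finsetSum (fun j _ => (jump_summable d j).mul_left _)]
    refine Finset.sum_congr rfl fun j _ => ?_
    rw [tsum_mul_left, zsmul_eq_mul]
    rfl
  have hbound : ∀ n, |(C n : ℝ)| ≤ ∑ j ∈ s, |(g j : ℝ)| := by
    intro n
    rw [hC]
    push_cast
    refine (Finset.abs_sum_le_sum_abs _ _).trans (Finset.sum_le_sum fun j _ => ?_)
    split_ifs <;> simp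
  obtain ⟨N, hN⟩ := cantor_series C _ hbound hsum
  set P : Finset ℝ := (s' ∪ (Finset.range N).image d).filter (fun j => j < m) with hPdef
  have hev : ∀ᶠ y in 𝓝[<] m, ∀ p ∈ P, p < y := by
    rw [Filter.eventually_all_finset]
    intro p hp
    have hpm : p < m := (Finset.mem_filter.1 hp).2
    filter_upwards [Ioo_mem_nhdsLT hpm] with y hy using hy.1
  obtain ⟨l, hl, hlm⟩ := (hev.and self_mem_nhdsWithin).exists
  obtain ⟨n, hn⟩ := hd.exists_mem_open isOpen_Ioo (nonempty_Ioo.2 (mem_Iio.1 hlm))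
  have hnN : N ≤ n := by
    by_contra! hlt
    have : d n ∈ P := Finset.mem_filter.2
      ⟨Finset.mem_union_right _ (Finset.mem_image_of_mem d (Finset.mem_range.2 hlt)), hn.2⟩
    exact (hl _ this).not_gt hn.1
  have hCn : C n = g m := by
    simp only [hC]
    rw [Finset.sum_eq_single m]
    · rw [if_pos hn.2]
    · intro j hj hjm
      by_cases hgj : g j = 0
      · simp [hgj]
      · have hjs : j ∈ s' := Finset.mem_filter.2 ⟨hj, hgj⟩
        have : j ∈ P := Finset.mem_filter.2
          ⟨Finset.mem_union_left _ hjs, lt_of_le_of_ne (hmax j hjs) hjm⟩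
        rw [if_neg ((hl j this).trans hn.1).not_gt]
    · intro hms
      exact absurd (Finset.mem_filter.1 hmem).1 hms
  exact (Finset.mem_filter.1 hmem).2 (hCn ▸ hN n hnN)

theorem jump_null (d : ℕ → ℝ) : MeasureTheory.volume (closure (range (jumpFun d))) = 0 := by
  set E : ℝ := ∑' k : ℕ, 1 / (k.factorial : ℝ) with hE
  have key : ∀ N : ℕ, MeasureTheory.volume (closure (range (jumpFun d))) ≤
      ENNReal.ofReal (E * ((2:ℝ) ^ N / (N.factorial : ℝ))) := by
    intro N
    set c : Finset ℕ → ℝ := fun A => ∑ n ∈ A, 1 / (n.factorial : ℝ) with hc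
    set U : Set ℝ := ⋃ A ∈ (Finset.range N).powerset, Icc (c A) (c A + E / (N.factorial : ℝ)) with hU
    have hUc : IsClosed U := by
      refine Set.Finite.isClosed_biUnion (Finset.finite_toSet _) (fun A _ => isClosed_Icc)
    have hsub : range (jumpFun d) ⊆ U := by
      rintro _ ⟨x, rfl⟩
      refine mem_iUnion₂.2 ⟨(Finset.range N).filter (fun n => d n < x), by simp, ?_⟩
      have h1 := (jump_summable d x).sum_add_tsum_nat_add N
      have h2 : c ((Finset.range N).filter (fun n => d n < x)) =
          ∑ n ∈ Finset.range N, if d n < x then (1 / (n.factorial : ℝ)) else 0 := by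
        simp only [hc]
        rw [Finset.sum_filter]
      rw [← h2] at h1
      have h3 : 0 ≤ ∑' k, (if d (k + N) < x then (1 / ((k + N).factorial : ℝ)) else 0) := by
        refine tsum_nonneg fun k => ?_
        split_ifs <;> positivity
      have h4 : ∑' k, (if d (k + N) < x then (1 / ((k + N).factorial : ℝ)) else 0) ≤
          E / (N.factorial : ℝ) := by
        refine le_trans ?_ (tail_bound N)
        refine Summable.tsum_le_tsum (fun k => ?_) ((summable_nat_add_iff N).2 (jump_summable d x))
          ((summable_nat_add_iff N).2 summable_inv_fact)
        split_ifs
        · exact le_rfl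
        · positivity
      unfold jumpFun
      rw [← h1]
      constructor <;> linarith
    refine (MeasureTheory.measure_mono (closure_minimal hsub hUc)).trans ?_
    refine (MeasureTheory.measure_biUnion_finset_le _ _).trans ?_
    simp only [Real.volume_Icc, add_sub_cancel_left, Finset.sum_const, Finset.card_powerset,
      Finset.card_range, nsmul_eq_mul]
    rw [show E * ((2:ℝ) ^ N / (N.factorial : ℝ)) = ((2 ^ N : ℕ) : ℝ) * (E / N.factorial) by
      push_cast; ring, ENNReal.ofReal_mul (by positivity), ENNReal.ofReal_natCast]
  have hlim : Tendsto (fun N : ℕ => ENNReal.ofReal (E * ((2:ℝ) ^ N / (N.factorial : ℝ)))) atTop (𝓝 0) := by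
    have := (FloorSemiring.tendsto_pow_div_factorial_atTop (2:ℝ)).const_mul E
    rw [mul_zero] at this
    simpa using ENNReal.tendsto_ofReal this
  exact le_antisymm (ge_of_tendsto' hlim key) bot_le

/-- Transfinite construction inside a subgroup. -/
theorem exists_tiling_subgroup (Y : Set ℝ) (hY : Y.Infinite) (H : AddSubgroup ℝ)
    (hYH : Y ⊆ H) (hcard : Cardinal.mk H ≤ Cardinal.mk Y)
    (hP : ∀ t, t ∉ Y → ∃ a b : ℝ, ∀ y ∈ Y, ∀ y₁ ∈ Y, ∀ y₂ ∈ Y, t = y + y₂ - y₁ → y = a ∨ y = b) :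
    ∃ T : Set ℝ, T ⊆ H ∧ (∀ s ∈ T, ∀ t ∈ T, ∀ y ∈ Y, ∀ z ∈ Y, s + y = t + z → s = t) ∧
      ∀ h ∈ H, ∃ t ∈ T, ∃ y ∈ Y, h = t + y := by
  set κ := Cardinal.mk H with hκ
  have hinf : Cardinal.aleph0 ≤ Cardinal.mk Y := by
    have := hY.to_subtype
    exact Cardinal.aleph0_le_mk Y
  let I := κ.ord.ToType
  have hI : Cardinal.mk I = Cardinal.mk H := by simp [I, hκ]
  obtain ⟨e⟩ := Cardinal.eq.1 hI
  have hIio : ∀ α : I, Cardinal.mk (Iio α) < Cardinal.mk Y := fun α =>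
    (Cardinal.mk_Iio_toType_ord_lt α).trans_le hcard
  let good : (α : I) → ((β : I) → β < α → ℝ) → ℝ → Prop := fun α g ξ =>
    (∃ y ∈ Y, (e α : ℝ) = ξ + y) ∧
      ∀ β (hβ : β < α), ∀ y ∈ Y, ∀ z ∈ Y, ξ + y = g β hβ + z → ξ = g β hβ
  classical
  let F : (α : I) → ((β : I) → β < α → ℝ) → ℝ := fun α g =>
    if h : ∃ ξ, good α g ξ then h.choose else 0
  let ξ : I → ℝ := (wellFounded_lt (α := I)).fix F
  have hfix : ∀ α, ξ α = F α (fun β _ => ξ β) := fun α => WellFounded.fix_eq _ _ _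
  have hgood : ∀ α, good α (fun β _ => ξ β) (ξ α) := by
    intro α
    induction α using (wellFounded_lt (α := I)).induction with
    | _ α ih =>
    have hex : ∃ x, good α (fun β _ => ξ β) x := by
      by_cases hcov : ∃ β, β < α ∧ ∃ y ∈ Y, (e α : ℝ) = ξ β + y
      · obtain ⟨β, hβ, hy⟩ := hcov
        refine ⟨ξ β, hy, fun γ hγ y hy z hz heq => ?_⟩
        rcases lt_trichotomy γ β with h | h | h
        · exact (ih β hβ).2 γ h y hy z hz heq
        · exact (congrArg ξ h).symm
        · exact ((ih γ hγ).2 β h z hz y hy heq.symm).symm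
      · push Not at hcov
        have hP' : ∀ β : Iio α, ∃ a b : ℝ, ∀ y ∈ Y, ∀ y₁ ∈ Y, ∀ y₂ ∈ Y,
            (e α : ℝ) - ξ β = y + y₂ - y₁ → y = a ∨ y = b := fun β =>
          hP _ (fun hmem => hcov β β.2 _ hmem (by ring))
        choose a b hab using hP'
        let p : Iio α × Bool → ℝ := fun q => if q.2 then a q.1 else b q.1
        have hlt : Cardinal.mk (range p) < Cardinal.mk Y := by
          refine Cardinal.mk_range_le.trans_lt ?_
          rw [Cardinal.mk_prod, Cardinal.lift_id, Cardinal.lift_id]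
          refine Cardinal.mul_lt_of_lt hinf (hIio α) ?_
          exact (Cardinal.mk_lt_aleph0).trans_le hinf
        obtain ⟨y, hy, hyp⟩ : ∃ y ∈ Y, y ∉ range p := by
          by_contra! hcon
          exact absurd (Cardinal.mk_le_mk_of_subset hcon) hlt.not_ge
        refine ⟨e α - y, ⟨y, hy, by ring⟩, fun β hβ y₁ hy₁ y₂ hy₂ heq => ?_⟩
        exfalso
        rcases hab ⟨β, hβ⟩ y hy y₁ hy₁ y₂ hy₂ (by linarith) with h | h
        · exact hyp ⟨(⟨β, hβ⟩, true), by simp [p, h]⟩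
        · exact hyp ⟨(⟨β, hβ⟩, false), by simp [p, h]⟩
    rw [hfix α]
    simp only [F]
    rw [dif_pos hex]
    exact hex.choose_spec
  refine ⟨range ξ, ?_, ?_, ?_⟩
  · rintro _ ⟨α, rfl⟩
    obtain ⟨y, hy, h⟩ := (hgood α).1
    have : ξ α = e α - y := by linarith
    rw [this]
    exact H.sub_mem (e α).2 (hYH hy)
  · rintro _ ⟨α, rfl⟩ _ ⟨β, rfl⟩ y hy z hz h
    rcases lt_trichotomy α β with h' | h' | h'
    · exact ((hgood β).2 α h' z hz y hy h.symm).symm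
    · rw [h']
    · exact (hgood α).2 β h' y hy z hz h
  · intro h hh
    obtain ⟨y, hy, h'⟩ := (hgood (e.symm ⟨h, hh⟩)).1
    exact ⟨_, ⟨_, rfl⟩, y, hy, by simpa using h'⟩

theorem exists_tiling (Y : Set ℝ) (hY : Y.Infinite)
    (hP : ∀ t, t ∉ Y → ∃ a b : ℝ, ∀ y ∈ Y, ∀ y₁ ∈ Y, ∀ y₂ ∈ Y, t = y + y₂ - y₁ → y = a ∨ y = b)
    (hQ : ∀ y ∈ Y, ∀ y' ∈ Y, ∀ z ∈ Y, ∀ z' ∈ Y, 2 * y - y' = 2 * z - z' → y = z) :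
    ∃ S : Set ℝ, Cardinal.mk S = Cardinal.continuum ∧
      (∀ s ∈ S, ∀ t ∈ S, ∀ y ∈ Y, ∀ z ∈ Y, s + y = t + z → s = t) ∧
      ∀ h, ∃ t ∈ S, ∃ y ∈ Y, h = t + y := by
  have hYi := hY.to_subtype
  have hinf : Cardinal.aleph0 ≤ Cardinal.mk Y := Cardinal.aleph0_le_mk Y
  let Lc := Finsupp.linearCombination ℤ (Subtype.val : Y → ℝ)
  let H : AddSubgroup ℝ := (LinearMap.range Lc).toAddSubgroup
  have hcard : Cardinal.mk H ≤ Cardinal.mk Y := by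
    have h1 : Cardinal.mk H ≤ Cardinal.mk (Y →₀ ℤ) := Cardinal.mk_range_le (f := Lc)
    refine h1.trans ?_
    simp [hinf]
  have hYH : Y ⊆ H := by
    intro y hy
    exact ⟨Finsupp.single ⟨y, hy⟩ 1, by simp [Lc]⟩
  obtain ⟨T, hTH, hT1, hT2⟩ := exists_tiling_subgroup Y hY H hYH hcard hP
  let S : Set ℝ := {s | ∃ q : ℝ ⧸ H, ∃ t ∈ T, s = q.out + t}
  have hcov : ∀ h, ∃ t ∈ S, ∃ y ∈ Y, h = t + y := by
    intro h
    have hmem : -(QuotientAddGroup.mk h : ℝ ⧸ H).out + h ∈ H := by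
      rw [← QuotientAddGroup.eq]
      simp
    obtain ⟨t, ht, y, hy, hh⟩ := hT2 _ hmem
    exact ⟨_, ⟨_, t, ht, rfl⟩, y, hy, by linarith⟩
  refine ⟨S, ?_, ?_, hcov⟩
  · have h2 : ∀ y : Y, ∃ s : S, ∃ y' ∈ Y, 2 * (y : ℝ) = s + y' := fun y => by
      obtain ⟨t, ht, h⟩ := hcov (2 * y)
      exact ⟨⟨t, ht⟩, h⟩
    choose σ y' hy' hσ using h2
    have hinj : Function.Injective σ := by
      intro y z h
      have e1 := hσ y
      have e2 := hσ z
      rw [h] at e1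
      exact Subtype.ext (hQ y y.2 _ (hy' y) z z.2 _ (hy' z) (by linarith))
    have hYS : Cardinal.mk Y ≤ Cardinal.mk S := Cardinal.mk_le_of_injective hinj
    refine le_antisymm ((Cardinal.mk_set_le S).trans Cardinal.mk_real.le) ?_
    have hsurj : Function.Surjective (fun p : S × Y => (p.1 : ℝ) + p.2) := by
      intro h
      obtain ⟨t, ht, y, hy, hh⟩ := hcov h
      exact ⟨(⟨t, ht⟩, ⟨y, hy⟩), hh.symm⟩
    have := Cardinal.mk_le_of_surjective hsurj
    rw [Cardinal.mk_real, Cardinal.mk_prod, Cardinal.lift_id, Cardinal.lift_id] at this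
    refine this.trans ?_
    refine (mul_le_mul_right hYS _).trans ?_
    exact (Cardinal.mul_eq_self (hinf.trans hYS)).le
  · rintro _ ⟨q, t, ht, rfl⟩ _ ⟨q', t', ht', rfl⟩ y hy z hz h
    have hqq : q = q' := by
      rw [← QuotientAddGroup.out_eq' q, ← QuotientAddGroup.out_eq' q', QuotientAddGroup.eq]
      have : -q.out + q'.out = t + y - (t' + z) := by linarith
      rw [this]
      exact H.sub_mem (H.add_mem (hTH ht) (hYH hy)) (H.add_mem (hTH ht') (hYH hz))
    subst hqq
    rw [hT1 t ht t' ht' y hy z hz (by linarith)]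

theorem indep_two {f : ℝ → ℝ} (hf : LinearIndependent ℤ f) {y y' z z' : ℝ}
    (h : 2 * f y - f y' = 2 * f z - f z') : y = z := by
  classical
  have h1 : Finsupp.linearCombination ℤ f (Finsupp.single y 2 + Finsupp.single z' 1) =
      Finsupp.linearCombination ℤ f (Finsupp.single z 2 + Finsupp.single y' 1) := by
    simp
    linarith
  have h2 := hf h1
  have e1 := DFunLike.congr_fun h2 y
  simp only [Finsupp.add_apply, Finsupp.single_apply] at e1
  grind

theorem indep_three {f : ℝ → ℝ} (hf : LinearIndependent ℤ f) {a b c a' b' c' : ℝ}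
    (hca : c ≠ a) (hcb : c ≠ b)
    (h : f a + f b - f c = f a' + f b' - f c') : a' = a ∨ a' = b := by
  classical
  have h1 : Finsupp.linearCombination ℤ f
      (Finsupp.single a 1 + Finsupp.single b 1 + Finsupp.single c' 1) =
      Finsupp.linearCombination ℤ f
      (Finsupp.single a' 1 + Finsupp.single b' 1 + Finsupp.single c 1) := by
    simp
    linarith
  have h2 := hf h1
  have e1 := DFunLike.congr_fun h2 c
  have e2 := DFunLike.congr_fun h2 a'
  simp only [Finsupp.add_apply, Finsupp.single_apply] at e1 e2
  grind

theorem dense_compl_of_totallyDisconnected {X : Set ℝ} (h : IsTotallyDisconnected X) :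
    Dense Xᶜ := by
  rw [← interior_eq_empty_iff_dense_compl, Set.eq_empty_iff_forall_notMem]
  intro x hx
  obtain ⟨ε, hε, hb⟩ := Metric.isOpen_iff.1 isOpen_interior x hx
  have hsub := h (Metric.ball x ε) (hb.trans interior_subset) (convex_ball x ε).isPreconnected
  have h1 : x = x + ε / 2 := hsub (Metric.mem_ball_self hε) (by
    rw [Metric.mem_ball, Real.dist_eq, add_sub_cancel_left, abs_of_pos (by positivity)]; linarith)
  linarith

theorem exists_seq (X : Set ℝ) : ∃ d : ℕ → ℝ, DenseRange d ∧
    (IsTotallyDisconnected X → ∀ n, ∀ x ∈ X, d n ≠ x) := by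
  by_cases h : IsTotallyDisconnected X
  · have hd := dense_compl_of_totallyDisconnected h
    have : Nonempty (Xᶜ : Set ℝ) := hd.nonempty.to_subtype
    obtain ⟨u, hu⟩ := TopologicalSpace.exists_dense_seq (Xᶜ : Set ℝ)
    refine ⟨fun n => u n, ?_, fun _ n x hx he => (u n).2 (by
      have he' : (u n : ℝ) = x := he
      rw [he']; exact hx)⟩
    exact hd.denseRange_val.comp hu continuous_subtype_val
  · obtain ⟨u, hu⟩ := TopologicalSpace.exists_dense_seq ℝ
    exact ⟨u, hu, fun h' => absurd h' h⟩

theorem jump_isEmbedding {f : ℝ → ℝ} (hf : StrictMono f) (X : Set ℝ)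
    (hc : ∀ x ∈ X, ContinuousAt f x) : IsEmbedding (fun x : X => f x) := by
  refine ⟨isInducing_iff_nhds.2 fun x => le_antisymm ?_ ?_, fun a b h => Subtype.ext (hf.injective h)⟩
  · rw [← map_le_iff_le_comap]
    exact (hc x x.2).comp continuousAt_subtype_val
  · rw [nhds_subtype_eq_comap]
    have : (fun x : X => f x) = f ∘ Subtype.val := rfl
    rw [this, ← comap_comap]
    refine comap_mono ?_
    intro s hs
    obtain ⟨a, b, hab, hs⟩ := mem_nhds_iff_exists_Ioo_subset.1 hs
    refine ⟨Ioo (f a) (f b), Ioo_mem_nhds (hf hab.1) (hf hab.2), fun y hy => hs ?_⟩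
    exact ⟨hf.lt_iff_lt.1 hy.1, hf.lt_iff_lt.1 hy.2⟩

end TranslatesAux

theorem partition_into_translates_of_copy (X : Set ℝ) (hX : X.Infinite) :
    ∃ (Y : Set ℝ) (φ : ℝ → ℝ) (S : Set ℝ),
      IsNowhereDense Y ∧ MeasureTheory.volume Y = 0 ∧
      StrictMonoOn φ X ∧ φ '' X = Y ∧
      (IsTotallyDisconnected X → ∃ h : ↥X ≃ₜ ↥Y, ∀ x : ↥X, (h x : ℝ) = φ x) ∧
      Cardinal.mk S = Cardinal.continuum ∧
      S.PairwiseDisjoint (fun ξ => (fun y => ξ + y) '' Y) ∧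
      (⋃ ξ ∈ S, (fun y => ξ + y) '' Y) = Set.univ := by
  obtain ⟨d, hd, hdX⟩ := exists_seq X
  set f := jumpFun d with hf
  have hmono : StrictMono f := jump_strictMono d hd
  have hli : LinearIndependent ℤ f := jump_linearIndependent d hd
  have hsub : f '' X ⊆ Set.range f := Set.image_subset_range f X
  have hnull : MeasureTheory.volume (closure (f '' X)) = 0 :=
    MeasureTheory.measure_mono_null (closure_mono hsub) (jump_null d)
  have hinf : (f '' X).Infinite := hX.image hmono.injective.injOn
  obtain ⟨S, hS, hS1, hS2⟩ := exists_tiling (f '' X) hinf (by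
    intro t ht
    by_cases hex : ∃ a ∈ X, ∃ b ∈ X, ∃ c ∈ X, t = f a + f b - f c
    · obtain ⟨a, ha, b, hb, c, hc, rfl⟩ := hex
      refine ⟨f a, f b, ?_⟩
      rintro _ ⟨a', ha', rfl⟩ _ ⟨c', hc', rfl⟩ _ ⟨b', hb', rfl⟩ h
      have hca : c ≠ a := by
        rintro rfl
        exact ht ⟨b, hb, by ring⟩
      have hcb : c ≠ b := by
        rintro rfl
        exact ht ⟨a, ha, by ring⟩
      exact (indep_three hli hca hcb h).imp (congrArg f) (congrArg f)
    · refine ⟨0, 0, ?_⟩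
      rintro _ ⟨a', ha', rfl⟩ _ ⟨c', hc', rfl⟩ _ ⟨b', hb', rfl⟩ h
      exact absurd ⟨a', ha', b', hb', c', hc', h⟩ hex) (by
    rintro _ ⟨y, hy, rfl⟩ _ ⟨y', hy', rfl⟩ _ ⟨z, hz, rfl⟩ _ ⟨z', hz', rfl⟩ h
    rw [indep_two hli h])
  refine ⟨f '' X, f, S, ?_, ?_, hmono.strictMonoOn X, rfl, ?_, hS, ?_, ?_⟩
  · exact (isOpen_interior.measure_eq_zero_iff MeasureTheory.volume).1
      (MeasureTheory.measure_mono_null interior_subset hnull)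
  · exact MeasureTheory.measure_mono_null subset_closure hnull
  · intro h
    have hemb := jump_isEmbedding hmono X (fun x hx =>
      jump_continuousAt d x (fun n => hdX h n x hx))
    have hr : Set.range (fun x : X => f x) = f '' X := by
      ext y; simp
    exact ⟨hemb.toHomeomorph.trans (Homeomorph.setCongr hr), fun x => rfl⟩
  · intro s hs t ht hst
    rw [Function.onFun, Set.disjoint_left]
    rintro _ ⟨y, hy, rfl⟩ ⟨z, hz, h⟩
    exact hst (hS1 s hs t ht y hy z hz h.symm)
  · refine Set.eq_univ_of_forall fun h => ?_
    obtain ⟨t, ht, y, hy, e⟩ := hS2 h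
    exact Set.mem_iUnion₂.2 ⟨t, ht, y, hy, e.symm⟩
end

section
/- The Baire space ℝ \ ℚ can be partitioned into exactly κ pairwise homeomorphic Bernstein sets for every cardinal κ with 2 ≤ κ ≤ 2^ℵ₀. -/
/-- A Cantor set in a topological space: nonempty, compact, totally disconnected, perfect. -/
def IsCantorSet {P : Type*} [TopologicalSpace P] (C : Set P) : Prop :=
  C.Nonempty ∧ IsCompact C ∧ IsTotallyDisconnected C ∧ Perfect C

/-- A Bernstein set: no Cantor set is contained in it or in its complement. -/
def IsBernstein {P : Type*} [TopologicalSpace P] (B : Set P) : Prop :=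
  ∀ C : Set P, IsCantorSet C → ¬C ⊆ B ∧ ¬C ⊆ Bᶜ

namespace BernAux
open Filter Topology Set

def tail (a : ℕ → ℕ) : ℕ → ℕ := fun n => a (n + 1)

noncomputable def E : ℕ → (ℕ → ℕ) → ℝ → ℝ
  | 0, _, t => t
  | (n + 1), a, t => (a 0 : ℝ) + 1 + (E n (tail a) t)⁻¹

lemma E_ge (n : ℕ) : ∀ (a : ℕ → ℕ) (t : ℝ), 1 ≤ t → 1 ≤ E n a t := by
  induction n with
  | zero => intro a t h; exact h
  | succ n ih =>
    intro a t h
    have h1 := ih (tail a) t h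
    have : 0 < (E n (tail a) t)⁻¹ := by positivity
    have h0 : (0 : ℝ) ≤ a 0 := Nat.cast_nonneg _
    simp only [E]; linarith

lemma E_succ (n : ℕ) : ∀ (a : ℕ → ℕ) (t : ℝ),
    E (n + 1) a t = E n a ((a n : ℝ) + 1 + t⁻¹) := by
  induction n with
  | zero => intro a t; rfl
  | succ n ih =>
    intro a t
    have := ih (tail a) t
    rw [E, this]; rfl

lemma one_contr {c s t : ℝ} (hs : 1 ≤ s) (ht : 1 ≤ t) :
    |(c + s⁻¹) - (c + t⁻¹)| = |s - t| * (s⁻¹ * t⁻¹) := by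
  have : (c + s⁻¹) - (c + t⁻¹) = -(s - t) * (s⁻¹ * t⁻¹) := by
    field_simp; ring
  rw [this, abs_mul, abs_neg, abs_of_pos (a := s⁻¹ * t⁻¹) (by positivity)]

lemma two_contr {c d s t : ℝ} (hd : 1 ≤ d) (hs : 1 ≤ s) (ht : 1 ≤ t) :
    |(c + (d + s⁻¹)⁻¹) - (c + (d + t⁻¹)⁻¹)| ≤ |s - t| * (1 / 4) := by
  have hs' : 0 < s⁻¹ := by positivity
  have ht' : 0 < t⁻¹ := by positivity
  rw [one_contr (by linarith) (by linarith), one_contr hs ht, mul_assoc]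
  apply mul_le_mul_of_nonneg_left _ (abs_nonneg _)
  have key : ∀ u : ℝ, 1 ≤ u → u⁻¹ * (d + u⁻¹)⁻¹ ≤ 1 / 2 := by
    intro u hu
    rw [← mul_inv, one_div]
    apply inv_anti₀ (by norm_num)
    have : u * (d + u⁻¹) = u * d + 1 := by field_simp
    rw [this]; nlinarith
  have h1 := key s hs
  have h2 := key t ht
  have p2 : 0 ≤ t⁻¹ * (d + t⁻¹)⁻¹ := by positivity
  calc s⁻¹ * t⁻¹ * ((d + s⁻¹)⁻¹ * (d + t⁻¹)⁻¹)
      = (s⁻¹ * (d + s⁻¹)⁻¹) * (t⁻¹ * (d + t⁻¹)⁻¹) := by ring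
    _ ≤ (1 / 2) * (1 / 2) := mul_le_mul h1 h2 p2 (by norm_num)
    _ = 1 / 4 := by norm_num

lemma E_contr : ∀ (n : ℕ) (a : ℕ → ℕ) (s t : ℝ), 1 ≤ s → 1 ≤ t →
    |E n a s - E n a t| ≤ 2 * (1 / 2) ^ n * |s - t|
  | 0, a, s, t, hs, ht => by
    simp only [E, pow_zero]; linarith [abs_nonneg (s - t)]
  | 1, a, s, t, hs, ht => by
    simp only [E]
    rw [one_contr hs ht]
    have : s⁻¹ * t⁻¹ ≤ 1 := mul_le_one₀ (inv_le_one_of_one_le₀ hs) (by positivity)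
      (inv_le_one_of_one_le₀ ht)
    have := mul_le_mul_of_nonneg_left this (abs_nonneg (s - t))
    norm_num; linarith
  | (n + 2), a, s, t, hs, ht => by
    have ih := E_contr n (tail (tail a)) s t hs ht
    simp only [E]
    have h0 : (0 : ℝ) ≤ (tail a 0 : ℕ) := Nat.cast_nonneg _
    have := two_contr (c := (a 0 : ℝ) + 1) (d := (tail a 0 : ℝ) + 1) (by linarith)
      (E_ge n (tail (tail a)) s hs) (E_ge n (tail (tail a)) t ht)
    refine this.trans ?_
    rw [pow_add]
    linarith

noncomputable def cn (n : ℕ) (a : ℕ → ℕ) : ℝ := E n a ((a n : ℝ) + 1)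

lemma cn_succ (n : ℕ) (a : ℕ → ℕ) : cn (n + 1) a = (a 0 : ℝ) + 1 + (cn n (tail a))⁻¹ := rfl

lemma cn_ge (n : ℕ) (a : ℕ → ℕ) : 1 ≤ cn n a :=
  E_ge _ _ _ (by have : (0 : ℝ) ≤ a n := Nat.cast_nonneg _
                 linarith)

lemma cn_dist (a : ℕ → ℕ) (n : ℕ) : dist (cn n a) (cn (n + 1) a) ≤ 2 * (1 / 2) ^ n := by
  have h0 : (0 : ℝ) ≤ a n := Nat.cast_nonneg _
  have h1 : (0 : ℝ) ≤ a (n + 1) := Nat.cast_nonneg _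
  have h2 : ((a (n + 1) : ℝ) + 1)⁻¹ ≤ 1 := inv_le_one_of_one_le₀ (by linarith)
  have h3 : 0 ≤ ((a (n + 1) : ℝ) + 1)⁻¹ := by positivity
  rw [Real.dist_eq]
  unfold cn
  rw [E_succ]
  refine (E_contr n a _ _ (by linarith) (by linarith)).trans ?_
  apply mul_le_of_le_one_right (by positivity)
  rw [abs_le]; constructor <;> linarith

lemma exists_v (a : ℕ → ℕ) : ∃ x, Tendsto (fun n => cn n a) atTop (𝓝 x) :=
  cauchySeq_tendsto_of_complete (cauchySeq_of_le_geometric _ _ (by norm_num) (cn_dist a))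

noncomputable def v (a : ℕ → ℕ) : ℝ := (exists_v a).choose

lemma v_spec (a : ℕ → ℕ) : Tendsto (fun n => cn n a) atTop (𝓝 (v a)) := (exists_v a).choose_spec

lemma v_ge (a : ℕ → ℕ) : 1 ≤ v a := ge_of_tendsto' (v_spec a) (fun n => cn_ge n a)

lemma v_rec (a : ℕ → ℕ) : v a = (a 0 : ℝ) + 1 + (v (tail a))⁻¹ := by
  have h1 := (tendsto_add_atTop_iff_nat 1).2 (v_spec a)
  have h2 : Tendsto (fun n => cn (n + 1) a) atTop (𝓝 ((a 0 : ℝ) + 1 + (v (tail a))⁻¹)) := by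
    simp only [cn_succ]
    exact ((v_spec (tail a)).inv₀ (by have := v_ge (tail a); positivity)).const_add _
  exact tendsto_nhds_unique h1 h2

lemma v_gt (a : ℕ → ℕ) : 1 < v a := by
  rw [v_rec]
  have := v_ge (tail a)
  have h0 : (0 : ℝ) ≤ a 0 := Nat.cast_nonneg _
  have : 0 < (v (tail a))⁻¹ := by positivity
  linarith

lemma v_inv (a : ℕ → ℕ) : 0 < (v a)⁻¹ ∧ (v a)⁻¹ < 1 :=
  ⟨by have := v_gt a; positivity, inv_lt_one_of_one_lt₀ (v_gt a)⟩

lemma cn_cont (n : ℕ) : Continuous (cn n) := by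
  induction n with
  | zero =>
    have : cn 0 = fun a => (a 0 : ℝ) + 1 := rfl
    rw [this]
    have : Continuous (fun k : ℕ => (k : ℝ)) := continuous_of_discreteTopology
    exact (this.comp (continuous_apply 0)).add continuous_const
  | succ n ih =>
    have : cn (n + 1) = fun a => (a 0 : ℝ) + 1 + (cn n (tail a))⁻¹ := rfl
    rw [this]
    have h : Continuous (fun k : ℕ => (k : ℝ)) := continuous_of_discreteTopology
    have ht : Continuous tail := continuous_pi fun n => continuous_apply (n + 1)
    refine ((h.comp (continuous_apply 0)).add continuous_const).add ((ih.comp ht).inv₀ ?_)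
    intro a
    have := cn_ge n (tail a)
    simp only [Function.comp]
    positivity

lemma v_cont : Continuous v := by
  have h : TendstoUniformly cn v atTop := by
    rw [Metric.tendstoUniformly_iff]
    intro ε hε
    have h1 : Tendsto (fun n : ℕ => 2 * (1 / 2 : ℝ) ^ n / (1 - 1 / 2)) atTop (𝓝 (2 * 0 / (1 - 1 / 2))) :=
      ((tendsto_pow_atTop_nhds_zero_of_lt_one (by norm_num) (by norm_num)).const_mul 2).div_const _
    have h2 := h1.eventually_lt_const (u := ε) (by simpa using hε)
    filter_upwards [h2] with n hn a
    rw [dist_comm]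
    exact (dist_le_of_le_geometric_of_tendsto _ _ (by norm_num) (cn_dist a) (v_spec a) n).trans_lt hn
  exact h.continuous (Frequently.of_forall cn_cont)

lemma v_irr : ∀ (d : ℕ) (a : ℕ → ℕ) (p : ℤ), 0 < d → v a * d ≠ p := by
  intro d
  induction d using Nat.strong_induction_on with
  | _ d ih =>
    intro a p hd h
    have hd' : (0 : ℝ) < d := by exact_mod_cast hd
    obtain ⟨h1, h2⟩ := v_inv (tail a)
    rw [v_rec] at h
    set w := v (tail a) with hw
    have hwp : 0 < w := by have := v_gt (tail a); rw [← hw] at this; linarith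
    have e : w⁻¹ * d = ((p - ((a 0 : ℤ) + 1) * d : ℤ) : ℝ) := by
      push_cast; rw [← h]; ring
    set q : ℤ := p - ((a 0 : ℤ) + 1) * d with hq
    have q0 : 0 < q := by
      have : (0 : ℝ) < q := by rw [← e]; positivity
      exact_mod_cast this
    have q1 : q < d := by
      have : (q : ℝ) < d := by rw [← e]; nlinarith
      exact_mod_cast this
    obtain ⟨m, hm⟩ := Int.eq_ofNat_of_zero_le q0.le
    refine ih m (by omega) (tail a) d (by omega) ?_
    rw [← hw]
    have : (m : ℝ) = (q : ℝ) := by rw [hm]; simp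
    rw [this, ← e]
    field_simp
    simp

lemma v_irrational (a : ℕ → ℕ) : Irrational (v a) := by
  rintro ⟨r, hr⟩
  refine v_irr r.den a r.num r.pos ?_
  rw [← hr]
  exact_mod_cast Rat.mul_den_eq_num r

abbrev Irr := {x : ℝ // Irrational x}

lemma fract_pos (x : Irr) : 0 < Int.fract (x : ℝ) :=
  lt_of_le_of_ne (Int.fract_nonneg _) (fun h => by
    have := Int.self_sub_floor (x : ℝ)
    rw [← h] at this
    exact x.2.ne_int ⌊(x : ℝ)⌋ (by linarith))

noncomputable def step (x : Irr) : Irr :=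
  ⟨(Int.fract (x : ℝ))⁻¹, by
    have h : Irrational (Int.fract (x : ℝ)) := x.2.sub_intCast _
    exact h.inv⟩

lemma step_val (x : Irr) : (step x : ℝ) = (Int.fract (x : ℝ))⁻¹ := rfl

lemma step_gt (x : Irr) : 1 < (step x : ℝ) :=
  (one_lt_inv₀ (fract_pos x)).2 (Int.fract_lt_one _)

lemma eq_step (x : Irr) : (x : ℝ) = ⌊(x : ℝ)⌋ + (step x : ℝ)⁻¹ := by
  rw [step_val, inv_inv, Int.floor_add_fract]

lemma floor_cont : Continuous (fun x : Irr => ⌊(x : ℝ)⌋) := by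
  rw [continuous_iff_continuousAt]
  intro x
  have h : ∀ᶠ y : Irr in 𝓝 x, ⌊(y : ℝ)⌋ = ⌊(x : ℝ)⌋ := by
    have : ∀ᶠ y : ℝ in 𝓝 (x : ℝ), y ∈ Ioo (⌊(x : ℝ)⌋ : ℝ) (⌊(x : ℝ)⌋ + 1) := by
      apply Ioo_mem_nhds
      · have := fract_pos x
        rw [Int.fract] at this; linarith
      · exact Int.lt_floor_add_one _
    have := (continuous_subtype_val.tendsto x).eventually this
    filter_upwards [this] with y hy
    exact Int.floor_eq_iff.2 ⟨hy.1.le, hy.2⟩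
  exact continuousAt_const.congr (h.mono fun y hy => hy.symm)

lemma step_cont : Continuous step := by
  refine Continuous.subtype_mk ?_ _
  refine Continuous.inv₀ ?_ (fun x => (fract_pos x).ne')
  have h : Continuous (fun k : ℤ => (k : ℝ)) := continuous_of_discreteTopology
  exact continuous_subtype_val.sub (h.comp floor_cont)

noncomputable def dig (x : Irr) (n : ℕ) : ℕ := (⌊(step^[n] x : ℝ)⌋ - 1).toNat

lemma dig_cont : Continuous dig := by
  refine continuous_pi fun n => ?_
  have h : Continuous (fun k : ℤ => (k - 1).toNat) := continuous_of_discreteTopology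
  exact h.comp (floor_cont.comp (step_cont.iterate n))

lemma tail_dig (x : Irr) : tail (dig x) = dig (step x) := rfl

lemma dig_zero (x : Irr) (hx : 1 < (x : ℝ)) : ((dig x 0 : ℕ) : ℝ) + 1 = ⌊(x : ℝ)⌋ := by
  have : 1 ≤ ⌊(x : ℝ)⌋ := Int.le_floor.2 (by simpa using hx.le)
  have h : ((dig x 0 : ℕ) : ℤ) + 1 = ⌊(x : ℝ)⌋ := by
    simp only [dig, Function.iterate_zero, id]; omega
  exact_mod_cast h

lemma close (n : ℕ) : ∀ x : Irr, 1 < (x : ℝ) → |(x : ℝ) - v (dig x)| ≤ 2 * (1 / 2) ^ n ∧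
    ∃ y z : ℝ, 1 ≤ y ∧ 1 ≤ z ∧ |y - z| ≤ 1 ∧ (x : ℝ) = E n (dig x) y ∧ v (dig x) = E n (dig x) z := by
  induction n with
  | zero =>
    intro x hx
    have h : |(x : ℝ) - v (dig x)| ≤ 1 := by
      rw [v_rec, dig_zero x hx]
      obtain ⟨h1, h2⟩ := v_inv (tail (dig x))
      have := Int.floor_le (x : ℝ)
      have := Int.lt_floor_add_one (x : ℝ)
      rw [abs_le]; constructor <;> linarith
    exact ⟨by norm_num; linarith, x, v (dig x), hx.le, v_ge _, h, rfl, rfl⟩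
  | succ n ih =>
    intro x hx
    obtain ⟨-, y, z, hy, hz, hyz, e1, e2⟩ := ih (step x) (step_gt x)
    have f1 : (x : ℝ) = E (n + 1) (dig x) y := by
      rw [E, tail_dig, ← e1, dig_zero x hx]; exact eq_step x
    have f2 : v (dig x) = E (n + 1) (dig x) z := by
      rw [E, tail_dig, ← e2, v_rec, tail_dig]
    refine ⟨?_, y, z, hy, hz, hyz, f1, f2⟩
    rw [f1, f2]
    exact (E_contr (n + 1) (dig x) y z hy hz).trans (mul_le_of_le_one_right (by positivity) hyz)

lemma v_dig (x : Irr) (hx : 1 < (x : ℝ)) : v (dig x) = x := by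
  have h1 : Tendsto (fun n : ℕ => 2 * (1 / 2 : ℝ) ^ n) atTop (𝓝 (2 * 0)) :=
    (tendsto_pow_atTop_nhds_zero_of_lt_one (by norm_num) (by norm_num)).const_mul 2
  have := ge_of_tendsto' h1 (fun n => (close n x hx).1)
  rw [mul_zero] at this
  have := abs_nonpos_iff.1 this
  linarith

noncomputable def mk (p : ℤ × (ℕ → ℕ)) : Irr :=
  ⟨(p.1 : ℝ) + (v p.2)⁻¹, (v_irrational p.2).inv.intCast_add p.1⟩

lemma floor_aux (z : ℤ) (a : ℕ → ℕ) : ⌊(z : ℝ) + (v a)⁻¹⌋ = z := by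
  obtain ⟨h1, h2⟩ := v_inv a
  exact Int.floor_eq_iff.2 ⟨by linarith, by linarith⟩

lemma step_mk (p : ℤ × (ℕ → ℕ)) : step (mk p) = ⟨v p.2, v_irrational _⟩ := by
  apply Subtype.ext
  rw [step_val]
  simp only [mk]
  rw [Int.fract, floor_aux]; simp

lemma vI_eq (a : ℕ → ℕ) : (⟨v a, v_irrational a⟩ : Irr) = mk ((a 0 : ℤ) + 1, tail a) := by
  apply Subtype.ext
  simp only [mk]; rw [v_rec]; push_cast; rfl

lemma dig_v (n : ℕ) : ∀ a : ℕ → ℕ, dig ⟨v a, v_irrational a⟩ n = a n := by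
  induction n with
  | zero =>
    intro a
    rw [vI_eq]
    simp only [dig, Function.iterate_zero, id, mk]
    rw [floor_aux]; simp
  | succ n ih =>
    intro a
    have : dig ⟨v a, v_irrational a⟩ (n + 1) = dig (step ⟨v a, v_irrational a⟩) n := rfl
    rw [this, vI_eq, step_mk, ih]; rfl

noncomputable def irrHomeo : Irr ≃ₜ ℤ × (ℕ → ℕ) where
  toFun x := (⌊(x : ℝ)⌋, dig (step x))
  invFun := mk
  left_inv x := by
    apply Subtype.ext
    simp only [mk]
    rw [v_dig _ (step_gt x)]; exact (eq_step x).symm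
  right_inv p := by
    refine Prod.ext ?_ ?_
    · exact floor_aux _ _
    · simp only [step_mk]
      funext n; exact dig_v n _
  continuous_toFun := floor_cont.prodMk (dig_cont.comp step_cont)
  continuous_invFun := by
    refine Continuous.subtype_mk ?_ _
    have h : Continuous (fun k : ℤ => (k : ℝ)) := continuous_of_discreteTopology
    refine (h.comp continuous_fst).add ((v_cont.comp continuous_snd).inv₀ ?_)
    intro p
    have := v_gt p.2
    simp only [Function.comp]
    positivity

open Cardinal

lemma mk_span_lt {V : Type} [AddCommGroup V] [Module ℚ V] (s : Set V) (hs : #s < 𝔠) :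
    #(Submodule.span ℚ s) < 𝔠 := by
  have h1 : #(Submodule.span ℚ s) ≤ #(s →₀ ℚ) := by
    have : Function.Surjective (fun l : s →₀ ℚ =>
        (⟨Finsupp.linearCombination ℚ ((↑) : s → V) l, by
          have := LinearMap.mem_range_self (Finsupp.linearCombination ℚ ((↑) : s → V)) l
          rwa [Finsupp.range_linearCombination, Subtype.range_coe] at this⟩ : Submodule.span ℚ s)) := by
      rintro ⟨y, hy⟩
      have h := hy
      rw [← Subtype.range_coe (s := s), ← Finsupp.range_linearCombination] at h
      obtain ⟨l, hl⟩ := h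
      exact ⟨l, Subtype.ext hl⟩
    exact mk_le_of_surjective this
  refine h1.trans_lt ?_
  rcases isEmpty_or_nonempty s with h | h
  · rw [mk_eq_one]; exact one_lt_aleph0.trans aleph0_lt_continuum
  · rw [mk_finsupp_of_infinite']
    exact max_lt hs (by rw [mk_eq_aleph0]; exact aleph0_lt_continuum)

lemma exists_linear {V K ι : Type} [AddCommGroup V] [Module ℚ V] [AddCommGroup K] [Module ℚ K]
    (C : ι → Set V) (k : ι → K) (hι : #ι ≤ 𝔠) (hC : ∀ i, 𝔠 ≤ #(C i)) :
    ∃ f : V →ₗ[ℚ] K, ∀ i, ∃ x ∈ C i, f x = k i := by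
  obtain ⟨g⟩ : Nonempty (ι ↪ (𝔠 : Cardinal.{0}).ord.ToType) := by
    rw [← Cardinal.le_def, mk_ord_toType]; exact hι
  have key : ∀ (i : ι) (s : {j // g j < g i} → V), ∃ x ∈ C i, x ∉ Submodule.span ℚ (range s) := by
    intro i s
    by_contra! hcon
    have h1 : #(C i) ≤ #(Submodule.span ℚ (range s)) := mk_le_mk_of_subset hcon
    have h2 : #(range s) < 𝔠 := by
      refine mk_range_le.trans_lt ?_
      refine lt_of_le_of_lt ?_ (Cardinal.mk_Iio_toType_ord_lt (g i))
      exact mk_le_of_injective (f := fun j : {j // g j < g i} => (⟨g j.1, j.2⟩ : Iio (g i)))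
        (fun a b h => Subtype.ext (g.injective (congrArg Subtype.val h)))
    exact absurd ((hC i).trans h1) (not_le.2 (mk_span_lt _ h2))
  choose F hF1 hF2 using key
  have wf : WellFounded (fun i j : ι => g i < g j) := InvImage.wf g wellFounded_lt
  let x : ι → V := wf.fix (fun i ih => F i (fun j => ih j.1 j.2))
  have hx : ∀ i, x i = F i (fun j => x j.1) := fun i => wf.fix_eq _ i
  have hli : LinearIndependent ℚ x := by
    rw [linearIndependent_iff']
    intro s c hc
    by_contra! hne
    obtain ⟨i0, hi0, hci0⟩ := hne
    classical
    obtain ⟨i, hi, hmax⟩ := (s.filter (fun i => c i ≠ 0)).exists_max_image g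
      ⟨i0, by simp [hi0, hci0]⟩
    rw [Finset.mem_filter] at hi
    have hn := hF2 i (fun j => x j.1)
    rw [← hx] at hn
    apply hn
    have e : c i • x i = - ∑ j ∈ s.erase i, c j • x j := by
      rw [← Finset.add_sum_erase s _ hi.1] at hc
      exact eq_neg_of_add_eq_zero_left hc
    have : c i • x i ∈ Submodule.span ℚ (range fun j : {j // g j < g i} => x j.1) := by
      rw [e]
      refine Submodule.neg_mem _ (Submodule.sum_mem _ fun j hj => ?_)
      by_cases h0 : c j = 0
      · simp [h0]
      · rw [Finset.mem_erase] at hj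
        have hle := hmax j (by simp [hj.2, h0])
        have hlt : g j < g i := lt_of_le_of_ne hle (fun h => hj.1 (g.injective h))
        exact Submodule.smul_mem _ _ (Submodule.subset_span ⟨⟨j, hlt⟩, rfl⟩)
    have h3 := Submodule.smul_mem _ (c i)⁻¹ this
    rwa [smul_smul, inv_mul_cancel₀ hi.2, one_smul] at h3
  obtain ⟨f, hf⟩ := ((Module.Basis.span hli).constr ℚ k).exists_extend
  refine ⟨f, fun i => ⟨x i, by rw [hx]; exact hF1 _ _, ?_⟩⟩
  have h1 : x i = ((Module.Basis.span hli i : Submodule.span ℚ (range x)) : V) := by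
    rw [Module.Basis.span_apply]
  have h2 := LinearMap.congr_fun hf (Module.Basis.span hli i)
  rw [Module.Basis.constr_basis] at h2
  rw [h1]; exact h2

/-- The rationals with the discrete topology. -/
def QD : Type := ℚ

noncomputable instance : AddCommGroup QD := inferInstanceAs (AddCommGroup ℚ)
noncomputable instance : Module ℚ QD := inferInstanceAs (Module ℚ ℚ)
instance : TopologicalSpace QD := ⊥
instance : DiscreteTopology QD := ⟨rfl⟩
instance : Countable QD := inferInstanceAs (Countable ℚ)
instance : Infinite QD := inferInstanceAs (Infinite ℚ)

abbrev VV : Type := QD × (ℕ → QD)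

lemma exists_homeo : Nonempty (Irr ≃ₜ VV) := by
  obtain ⟨e1⟩ := nonempty_equiv_of_countable (α := ℤ) (β := QD)
  obtain ⟨e2⟩ := nonempty_equiv_of_countable (α := ℕ) (β := QD)
  exact ⟨irrHomeo.trans ((e1.toHomeomorphOfDiscrete).prodCongr
    (Homeomorph.piCongrRight fun _ => e2.toHomeomorphOfDiscrete))⟩

lemma mk_closed : #{A : Set Irr // IsClosed A} ≤ 𝔠 := by
  have hb := TopologicalSpace.isBasis_countableBasis Irr
  have h := MeasurableSpace.cardinal_measurableSet_le_continuum
    (s := TopologicalSpace.countableBasis Irr)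
    ((TopologicalSpace.countable_countableBasis Irr).le_aleph0.trans aleph0_le_continuum)
  rw [← hb.borel_eq_generateFrom] at h
  refine le_trans (mk_le_mk_of_subset (s := {A : Set Irr | IsClosed A}) ?_) h
  intro A hA
  letI : MeasurableSpace Irr := borel Irr
  haveI : BorelSpace Irr := ⟨rfl⟩
  exact IsClosed.measurableSet hA

lemma mk_perfect {X : Type} [TopologicalSpace X] [PolishSpace X] (C : Set X) (h : Perfect C) (hn : C.Nonempty) : 𝔠 ≤ #C := by
  letI := TopologicalSpace.upgradeIsCompletelyMetrizable X
  obtain ⟨f, hf, -, hi⟩ := h.exists_nat_bool_injection hn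
  have : #(ℕ → Bool) ≤ #C :=
    mk_le_of_injective (f := fun a => (⟨f a, hf ⟨a, rfl⟩⟩ : C))
      (fun a b hab => hi (congrArg Subtype.val hab))
  simpa using this

lemma mk_univ_irr : 𝔠 ≤ #(univ : Set Irr) := by
  rw [Cardinal.mk_univ, mk_congr irrHomeo.toEquiv]
  simp

lemma main {K T : Type} [AddCommGroup K] [Module ℚ K] (q : K → T) (hq : Function.Surjective q)
    (htr : ∀ t t', ∃ a : K, ∀ x, q x = t ↔ q (x + a) = t') (hK : #K ≤ 𝔠) (hT : Nontrivial T) :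
    ∃ Part : Set (Set {x : ℝ // Irrational x}),
      Cardinal.mk Part = #T ∧ Part.PairwiseDisjoint id ∧ ⋃₀ Part = Set.univ ∧
      (∀ B ∈ Part, IsBernstein B) ∧
      ∀ A ∈ Part, ∀ B ∈ Part, Nonempty (↥A ≃ₜ ↥B) := by
  obtain ⟨e⟩ := exists_homeo
  haveI : PolishSpace Irr := e.isClosedEmbedding.polishSpace
  obtain ⟨f, hf⟩ := exists_linear (V := VV) (K := K)
    (ι := {A : {A : Set Irr // IsClosed A} // 𝔠 ≤ #A.1} × K)
    (fun i => e '' i.1.1.1) (fun i => i.2)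
    (by
      rw [mk_prod, lift_id, lift_id]
      exact mul_le_of_le aleph0_le_continuum ((mk_subtype_le _).trans mk_closed) hK)
    (fun i => by rw [mk_image_eq e.injective]; exact i.1.2)
  have hmeet : ∀ A : Set Irr, IsClosed A → 𝔠 ≤ #A → ∀ t, ∃ x ∈ A, q (f (e x)) = t := by
    intro A hA hc t
    obtain ⟨k, rfl⟩ := hq t
    obtain ⟨_, ⟨x, hx, rfl⟩, h⟩ := hf (⟨⟨A, hA⟩, hc⟩, k)
    exact ⟨x, hx, by rw [h]⟩
  let B : T → Set Irr := fun t => {x | q (f (e x)) = t}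
  have hinj : Function.Injective B := by
    intro t t' h
    obtain ⟨x, -, hx⟩ := hmeet univ isClosed_univ mk_univ_irr t
    have : x ∈ B t := hx
    rw [h] at this
    exact hx.symm.trans this
  refine ⟨range B, mk_range_eq _ hinj, ?_, ?_, ?_, ?_⟩
  · rintro _ ⟨t, rfl⟩ _ ⟨t', rfl⟩ hne
    refine Set.disjoint_left.2 fun x hx hx' => hne ?_
    have h1 : q (f (e x)) = t := hx
    have h2 : q (f (e x)) = t' := hx'
    rw [← h1, ← h2]
  · exact eq_univ_of_forall fun x => ⟨B (q (f (e x))), ⟨_, rfl⟩, rfl⟩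
  · rintro _ ⟨t, rfl⟩ C ⟨hn, -, -, hp⟩
    have hc := mk_perfect C hp hn
    constructor
    · intro hsub
      obtain ⟨t', ht'⟩ := exists_ne t
      obtain ⟨x, hx, hxt⟩ := hmeet C hp.closed hc t'
      exact ht' (hxt.symm.trans (hsub hx))
    · intro hsub
      obtain ⟨x, hx, hxt⟩ := hmeet C hp.closed hc t
      exact hsub hx hxt
  · rintro _ ⟨t, rfl⟩ _ ⟨t', rfl⟩
    obtain ⟨a, ha⟩ := htr t t'
    obtain ⟨w, -, hw⟩ := hf (⟨⟨univ, isClosed_univ⟩, mk_univ_irr⟩, a)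
    let φ : Irr ≃ₜ Irr := (e.trans (Homeomorph.addRight w)).trans e.symm
    refine ⟨φ.sets ?_⟩
    ext x
    have : f (e (φ x)) = f (e x) + a := by
      simp only [φ, Homeomorph.trans_apply, Homeomorph.apply_symm_apply, Homeomorph.coe_addRight,
        map_add, hw]
    change q (f (e x)) = t ↔ q (f (e (φ x))) = t'
    rw [this]; exact ha _

end BernAux

open Cardinal in
theorem baire_space_partition_into_kappa_homeomorphic_bernstein_sets
    (κ : Cardinal) (h2 : 2 ≤ κ) (hc : κ ≤ Cardinal.continuum) :
    ∃ Part : Set (Set {x : ℝ // Irrational x}),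
      Cardinal.mk Part = κ ∧ Part.PairwiseDisjoint id ∧ ⋃₀ Part = Set.univ ∧
      (∀ B ∈ Part, IsBernstein B) ∧
      ∀ A ∈ Part, ∀ B ∈ Part, Nonempty (↥A ≃ₜ ↥B) := by
  rcases lt_or_ge κ ℵ₀ with h | h
  · obtain ⟨n, rfl⟩ := lt_aleph0.1 h
    have hn : 2 ≤ n := by exact_mod_cast h2
    haveI : NeZero n := ⟨by omega⟩
    haveI : Fact (1 < n) := ⟨by omega⟩
    have := BernAux.main (K := ℚ) (T := ZMod n) (fun x => ((⌊x⌋ : ℤ) : ZMod n))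
      (fun t => by
        obtain ⟨z, hz⟩ := ZMod.intCast_surjective t
        exact ⟨z, by simpa using hz⟩)
      (fun t t' => by
        obtain ⟨z, hz⟩ := ZMod.intCast_surjective (t' - t)
        refine ⟨z, fun x => ?_⟩
        simp only [Int.floor_add_intCast, Int.cast_add, hz]
        constructor
        · intro h; rw [h]; ring
        · intro h; linear_combination h)
      (by rw [mk_eq_aleph0]; exact aleph0_le_continuum) inferInstance
    simpa [ZMod.card] using this
  · haveI : Infinite κ.out := by rw [infinite_iff, mk_out]; exact h
    have hk : #(κ.out →₀ ℚ) = κ := by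
      rw [mk_finsupp_of_infinite, mk_out, mk_eq_aleph0 ℚ]; exact max_eq_left h
    have := BernAux.main (K := κ.out →₀ ℚ) (T := κ.out →₀ ℚ) id Function.surjective_id
      (fun t t' => ⟨t' - t, fun x => by
        constructor
        · rintro rfl; simp
        · intro h
          have h : x + (t' - t) = t' := h
          have : x = t' - (t' - t) := eq_sub_of_add_eq h
          simpa using this⟩)
      (by rw [hk]; exact hc) inferInstance
    rwa [hk] at this
end
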